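/- arXiv:0903.4785 — 2 statements merged into one kernel-verified Lean document; each statement's English description precedes it below -/
import Mathlib

section
/- Let N ≥ 1, let w ≥ 2 be even, let n be an integer with 0 < n < w, set ñ = w − n, let D > 1 with gcd(N,D) = 1, and let h be an integer with gcd(h,D) = 1. Let c be an integer with c·N·h ≡ 1 (mod D). Define S_{3,h}(z) = 2·Σ_{k ∈ ℤ} 1/((Dz)^{ñ+1}·((c+kD)Nz + 1/D)^{n+1}) for z in the upper half-plane, and F_{3,h}(X) = ∫₀^{i∞} S_{3,h}(z)(X−z)^w dz + (−1)^{n−1}·∫₀^{i∞} S_{3,−h}(z)(X+z)^w dz. Then for every nonzero complex number X: F_{3,h}(X) = c_n·(−1)^{n−1}·(2i)^{w+1}·N^{ñ}·D^{w}·X^{w}·B_{ñ+1}({−c/D} − 1/(D²NX))/(ñ+1), where c_n = (−1)^n·4πi·(2i)^{−w−1}·C(w,n). -/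
open MeasureTheory Complex Real

noncomputable section

/-- The contour integral `∫₀^{i∞} F(z) dz` along the positive imaginary axis `z = iy`. -/
def intI (F : ℂ → ℂ) : ℂ := Complex.I * ∫ y in Set.Ioi (0 : ℝ), F (Complex.I * y)

/-- The constant `c_n = (−1)^n·4πi·(2i)^{−w−1}·C(w,n)`. -/
def cconst (w n : ℕ) : ℂ :=
  (-1) ^ n * 4 * Real.pi * Complex.I * (2 * Complex.I) ^ (-(w : ℤ) - 1) * (w.choose n)

/-- The `k`-th Bernoulli polynomial evaluated at a complex number. -/
def bpoly (k : ℕ) (x : ℂ) : ℂ := Polynomial.aeval x (Polynomial.bernoulli k)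

/-- `S_{3,h}(z) = 2 Σ_{k ∈ ℤ} 1/((Dz)^{ñ+1}((c+kD)Nz + 1/D)^{n+1})`, where `c` is an
inverse of `Nh` modulo `D`.  (Replacing `c` by `−c` gives `S_{3,−h}`.) -/
def S3 (N D w n : ℕ) (c : ℤ) (z : ℂ) : ℂ :=
  2 * ∑' k : ℤ, 1 / (((D : ℂ) * z) ^ (w - n + 1) *
      (((c : ℂ) + k * D) * N * z + 1 / D) ^ (n + 1))

/-!
The substitution `u = 1 / (D ^ 2 N z)` turns the two half-line integrals into the two halves of the
integral of `(s - x) ^ w` times the lattice sum `L(s) = ∑ k, 1 / (s + k) ^ (n + 1)` along the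
vertical line `re s = c / D`. Since `(s - x) ^ w = R(s) - R(s - 1)` for a shifted Bernoulli
polynomial `R`, and `L` is `1`-periodic, this is the difference of the integrals of `R * L` over two
vertical lines at distance one. By the residue theorem it is `2πi` times the coefficient of `s ^ n`
in `R`, itself a Bernoulli polynomial value because the Bernoulli polynomials form an Appell
sequence.
-/

open Filter Topology

lemma hasseDeriv_map_bernoulli {A : Type*} [Semiring A] [Algebra ℚ A] (n m : ℕ) :
    Polynomial.hasseDeriv n ((Polynomial.bernoulli m).map (algebraMap ℚ A)) =
      Polynomial.C (m.choose n : A) *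
        (Polynomial.bernoulli (m - n)).map (algebraMap ℚ A) := by
  ext i
  rw [Polynomial.hasseDeriv_coeff, Polynomial.coeff_C_mul, Polynomial.coeff_map,
    Polynomial.coeff_map, ← map_natCast (algebraMap ℚ A), ← map_natCast (algebraMap ℚ A),
    ← map_mul, ← map_mul, Polynomial.coeff_bernoulli, Polynomial.coeff_bernoulli]
  congr 1
  by_cases hi : i + n ≤ m
  · have hchoose : (m.choose (i + n) : ℚ) * (i + n).choose n =
        m.choose n * (m - n).choose i := by
      exact_mod_cast Nat.add_sub_cancel (n := i) (m := n) ▸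
        Nat.choose_mul (n := m) (Nat.le_add_left n i)
    rw [if_pos hi, if_pos (by lia), show m - n - i = m - (i + n) by lia]
    linear_combination bernoulli (m - (i + n)) * hchoose
  · rcases le_or_gt n m with hnm | hnm
    · rw [if_neg hi, if_neg (by lia), mul_zero, mul_zero]
    · simp [if_neg hi, Nat.choose_eq_zero_of_lt hnm]

/-- The polynomial `B_{w+1}(s + x) / (w + 1)` in `s`, whose backward difference is
`(s + x - 1) ^ w`. -/
def bernoulliAntidiff (w : ℕ) (x : ℂ) : Polynomial ℂ :=
  Polynomial.C ((w : ℂ) + 1)⁻¹ *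
    Polynomial.taylor x ((Polynomial.bernoulli (w + 1)).map (algebraMap ℚ ℂ))

lemma bpoly_eq_eval_map (k : ℕ) (x : ℂ) :
    bpoly k x = ((Polynomial.bernoulli k).map (algebraMap ℚ ℂ)).eval x := by
  rw [bpoly, Polynomial.aeval_def, Polynomial.eval_map]

lemma bpoly_one_add (k : ℕ) (x : ℂ) : bpoly k (1 + x) = bpoly k x + k * x ^ (k - 1) := by
  have h := congrArg (Polynomial.aeval x) (Polynomial.bernoulli_comp_one_add_X k)
  simpa [Polynomial.aeval_comp, bpoly] using h

lemma bernoulliAntidiff_eval_sub (w : ℕ) (x s : ℂ) :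
    (bernoulliAntidiff w x).eval s - (bernoulliAntidiff w x).eval (s - 1) = (s - 1 + x) ^ w := by
  have hw : (w : ℂ) + 1 ≠ 0 := by exact_mod_cast w.succ_ne_zero
  have hstep := bpoly_one_add (w + 1) (s - 1 + x)
  rw [show 1 + (s - 1 + x) = s + x by ring, Nat.add_sub_cancel] at hstep
  simp only [bernoulliAntidiff, Polynomial.eval_mul, Polynomial.eval_C, Polynomial.taylor_eval,
    ← bpoly_eq_eval_map, hstep]
  push_cast
  field_simp
  ring

lemma bernoulliAntidiff_coeff {n w : ℕ} (hnw : n ≤ w) (x : ℂ) :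
    (bernoulliAntidiff w x).coeff n = w.choose n * bpoly (w - n + 1) x / (w - n + 1) := by
  have hw : (w : ℂ) + 1 ≠ 0 := by exact_mod_cast w.succ_ne_zero
  have hwn : (w : ℂ) - n + 1 ≠ 0 := by
    rw [← Nat.cast_sub hnw]
    exact_mod_cast (w - n).succ_ne_zero
  have hchoose : (w.choose n : ℂ) * (w + 1) = (w + 1).choose n * (w - n + 1) := by
    have h := congrArg (Nat.cast (R := ℂ)) (Nat.choose_mul_succ_eq w n)
    rw [Nat.sub_add_comm hnw] at h
    push_cast [hnw] at h
    exact h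
  rw [bernoulliAntidiff, Polynomial.coeff_C_mul, Polynomial.taylor_coeff,
    hasseDeriv_map_bernoulli, Polynomial.eval_mul, Polynomial.eval_C, ← bpoly_eq_eval_map,
    Nat.sub_add_comm hnw]
  field_simp
  linear_combination -bpoly (w - n + 1) x * hchoose

section RectangleIntegral

open Interval

variable {E : Type*} [NormedAddCommGroup E] {f g F : ℂ → E} {z w : ℂ}

/-- The two sides of the rectangle with opposite corners `z` and `w` over which
`Complex.wedgeIntegral z w` integrates. -/
def wedgeSides (z w : ℂ) : Set ℂ := [[z.re, w.re]] ×ℂ {z.im} ∪ {w.re} ×ℂ [[z.im, w.im]]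

lemma horizontal_mem_wedgeSides {x : ℝ} (hx : x ∈ [[z.re, w.re]]) :
    (x + z.im * I : ℂ) ∈ wedgeSides z w :=
  Or.inl (by simpa [mem_reProdIm] using hx)

lemma vertical_mem_wedgeSides {y : ℝ} (hy : y ∈ [[z.im, w.im]]) :
    (w.re + y * I : ℂ) ∈ wedgeSides z w :=
  Or.inr (by simpa [mem_reProdIm] using hy)

lemma wedgeSides_union_wedgeSides_subset_rectangle (z w : ℂ) :
    wedgeSides z w ∪ wedgeSides w z ⊆ Rectangle z w := by
  have hwedge (u v : ℂ) : wedgeSides u v ⊆ Rectangle u v := by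
    rintro s (⟨hre, him⟩ | ⟨hre, him⟩)
    · exact ⟨hre, him ▸ Set.left_mem_uIcc⟩
    · exact ⟨hre ▸ Set.right_mem_uIcc, him⟩
  refine Set.union_subset (hwedge z w) ((hwedge w z).trans_eq ?_)
  simp only [Rectangle, Set.uIcc_comm]

lemma zero_notMem_wedgeSides (hz : z.im ≠ 0) (hw : w.re ≠ 0) : (0 : ℂ) ∉ wedgeSides z w := by
  rintro (⟨-, him⟩ | ⟨hre, -⟩)
  · exact hz him.symm
  · exact hw hre.symm

lemma intervalIntegrable_horizontal (hf : ContinuousOn f (wedgeSides z w)) :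
    IntervalIntegrable (fun x : ℝ => f (x + z.im * I)) volume z.re w.re :=
  (hf.comp (by fun_prop) fun _ => horizontal_mem_wedgeSides).intervalIntegrable

lemma intervalIntegrable_vertical (hf : ContinuousOn f (wedgeSides z w)) :
    IntervalIntegrable (fun y : ℝ => f (w.re + y * I)) volume z.im w.im :=
  (hf.comp (by fun_prop) fun _ => vertical_mem_wedgeSides).intervalIntegrable

variable [NormedSpace ℂ E]

/-- The integral of `f` along the boundary of the rectangle with opposite corners `z` and `w`,
counterclockwise when `z` is the lower left corner. -/
def rectIntegral (z w : ℂ) (f : ℂ → E) : E := wedgeIntegral z w f + wedgeIntegral w z f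

lemma wedgeIntegral_congr (hfg : Set.EqOn f g (wedgeSides z w)) :
    wedgeIntegral z w f = wedgeIntegral z w g := by
  unfold wedgeIntegral
  congr 1
  · exact intervalIntegral.integral_congr fun x hx => hfg (horizontal_mem_wedgeSides hx)
  · exact congrArg (I • ·)
      (intervalIntegral.integral_congr fun y hy => hfg (vertical_mem_wedgeSides hy))

lemma wedgeIntegral_add (hf : ContinuousOn f (wedgeSides z w))
    (hg : ContinuousOn g (wedgeSides z w)) :
    wedgeIntegral z w (fun s => f s + g s) = wedgeIntegral z w f + wedgeIntegral z w g := by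
  simp only [wedgeIntegral]
  rw [intervalIntegral.integral_add (intervalIntegrable_horizontal hf)
      (intervalIntegrable_horizontal hg),
    intervalIntegral.integral_add (intervalIntegrable_vertical hf)
      (intervalIntegrable_vertical hg), smul_add]
  abel

lemma rectIntegral_congr (hfg : Set.EqOn f g (wedgeSides z w ∪ wedgeSides w z)) :
    rectIntegral z w f = rectIntegral z w g := by
  rw [rectIntegral, wedgeIntegral_congr (hfg.mono Set.subset_union_left),
    wedgeIntegral_congr (hfg.mono Set.subset_union_right), rectIntegral]

lemma rectIntegral_add (hf : ContinuousOn f (wedgeSides z w ∪ wedgeSides w z))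
    (hg : ContinuousOn g (wedgeSides z w ∪ wedgeSides w z)) :
    rectIntegral z w (fun s => f s + g s) = rectIntegral z w f + rectIntegral z w g := by
  simp only [rectIntegral]
  rw [wedgeIntegral_add (hf.mono Set.subset_union_left) (hg.mono Set.subset_union_left),
    wedgeIntegral_add (hf.mono Set.subset_union_right) (hg.mono Set.subset_union_right)]
  abel

lemma rectIntegral_eq_zero_of_differentiableOn (hf : DifferentiableOn ℂ f (Rectangle z w)) :
    rectIntegral z w f = 0 := by
  rw [rectIntegral, hf.isConservativeOn z w subset_rfl, neg_add_cancel]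

lemma wedgeIntegral_eq_sub_of_hasDerivAt [CompleteSpace E]
    (hF : ∀ s ∈ wedgeSides z w, HasDerivAt F (f s) s) (hf : ContinuousOn f (wedgeSides z w)) :
    wedgeIntegral z w f = F w - F z := by
  have horizontal : ∫ x in z.re..w.re, f (x + z.im * I) =
      F (w.re + z.im * I) - F (z.re + z.im * I) := by
    refine intervalIntegral.integral_eq_sub_of_hasDerivAt (f := fun x : ℝ => F (x + z.im * I))
      (fun x hx => ?_) (intervalIntegrable_horizontal hf)
    have hpath : HasDerivAt (fun x : ℝ => (x + z.im * I : ℂ)) 1 x :=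
      (hasDerivAt_id x).ofReal_comp.add_const _
    simpa [Function.comp_def] using (hF _ (horizontal_mem_wedgeSides hx)).scomp x hpath
  have vertical : I • ∫ y in z.im..w.im, f (w.re + y * I) =
      F (w.re + w.im * I) - F (w.re + z.im * I) := by
    rw [← intervalIntegral.integral_smul]
    refine intervalIntegral.integral_eq_sub_of_hasDerivAt (f := fun y : ℝ => F (w.re + y * I))
      (f' := fun y => I • f (w.re + y * I))
      (fun y hy => ?_) ((intervalIntegrable_vertical hf).smul I)
    have hpath : HasDerivAt (fun y : ℝ => (w.re + y * I : ℂ)) I y := by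
      simpa using ((hasDerivAt_id y).ofReal_comp.mul_const I).const_add (w.re : ℂ)
    exact (hF _ (vertical_mem_wedgeSides hy)).scomp y hpath
  rw [wedgeIntegral, horizontal, vertical, re_add_im, re_add_im]
  abel

lemma rectIntegral_inv (hz : z.re < 0 ∧ z.im < 0) (hw : 0 < w.re ∧ 0 < w.im) :
    rectIntegral z w (fun s => s⁻¹) = 2 * π * I := by
  have hlower : wedgeIntegral z w (fun s => s⁻¹) = Complex.log w - Complex.log z := by
    refine wedgeIntegral_eq_sub_of_hasDerivAt (fun s hs => hasDerivAt_log ?_)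
      (continuousOn_id.inv₀ fun s hs => ?_)
    · rcases hs with ⟨-, him⟩ | ⟨hre, -⟩
      · exact Or.inr (him.trans_ne hz.2.ne)
      · exact Or.inl (hw.1.trans_eq hre.symm)
    · exact ne_of_mem_of_not_mem hs (zero_notMem_wedgeSides hz.2.ne hw.1.ne')
  -- The left side crosses the branch cut of `log`, but not that of `log (-s)`.
  have hupper : wedgeIntegral w z (fun s => s⁻¹) = Complex.log (-z) - Complex.log (-w) := by
    refine wedgeIntegral_eq_sub_of_hasDerivAt (F := fun s => Complex.log (-s)) (fun s hs => ?_)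
      (continuousOn_id.inv₀ fun s hs => ?_)
    · have hslit : -s ∈ slitPlane := by
        rcases hs with ⟨-, him⟩ | ⟨hre, -⟩
        · exact Or.inr (neg_ne_zero.mpr (him.trans_ne hw.2.ne'))
        · exact Or.inl (neg_pos.mpr (hre.trans_lt hz.1))
      simpa using (hasDerivAt_neg s).clog hslit
    · exact ne_of_mem_of_not_mem hs (zero_notMem_wedgeSides hw.2.ne' hz.1.ne)
  have hlogz : Complex.log (-z) = Complex.log z + π * I := by
    simp only [Complex.log, norm_neg, arg_neg_eq_arg_add_pi_of_im_neg hz.2]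
    push_cast; ring
  have hlogw : Complex.log (-w) = Complex.log w - π * I := by
    simp only [Complex.log, norm_neg, arg_neg_eq_arg_sub_pi_of_im_pos hw.2]
    push_cast; ring
  rw [rectIntegral, hlower, hupper, hlogz, hlogw]
  ring

lemma rectIntegral_zpow_of_ne_neg_one (hzw : (0 : ℂ) ∉ wedgeSides z w)
    (hwz : (0 : ℂ) ∉ wedgeSides w z) {k : ℤ} (hk : k ≠ -1) :
    rectIntegral z w (fun s => s ^ k) = 0 := by
  have hk' : ((k + 1 : ℤ) : ℂ) ≠ 0 := by exact_mod_cast fun h => hk (by lia)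
  have hwedge {u v : ℂ} (h0 : (0 : ℂ) ∉ wedgeSides u v) : wedgeIntegral u v (fun s => s ^ k) =
      v ^ (k + 1) / (k + 1 : ℤ) - u ^ (k + 1) / (k + 1 : ℤ) := by
    refine wedgeIntegral_eq_sub_of_hasDerivAt (F := fun s => s ^ (k + 1) / (k + 1 : ℤ))
      (fun s hs => ?_) (continuousOn_id.zpow₀ k fun s hs => Or.inl (ne_of_mem_of_not_mem hs h0))
    have hderiv := (hasDerivAt_zpow (k + 1) s (Or.inl (ne_of_mem_of_not_mem hs h0))).div_const
      ((k + 1 : ℤ) : ℂ)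
    rwa [add_sub_cancel_right, mul_div_cancel_left₀ _ hk'] at hderiv
  rw [rectIntegral, hwedge hzw, hwedge hwz]
  ring

lemma integral_vertical_sub_of_rectIntegral_eq {a b : ℝ} {r : E}
    (ha : Integrable fun y : ℝ => f (a + y * I)) (hb : Integrable fun y : ℝ => f (b + y * I))
    (hhor : Tendsto (fun T : ℝ => ∫ x in a..b, f (x + T * I)) (cocompact ℝ) (𝓝 0))
    (hrect : ∀ T : ℝ, 0 < T → rectIntegral ⟨a, -T⟩ ⟨b, T⟩ f = r) :
    I • ((∫ y : ℝ, f (b + y * I)) - ∫ y : ℝ, f (a + y * I)) = r := by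
  have hvert {c : ℝ} (hc : Integrable fun y : ℝ => f (c + y * I)) :
      Tendsto (fun T : ℝ => ∫ y in (-T)..T, f (c + y * I)) atTop (𝓝 (∫ y : ℝ, f (c + y * I))) :=
    intervalIntegral_tendsto_integral hc tendsto_neg_atTop_atBot tendsto_id
  have hbot := hhor.comp (tendsto_neg_atTop_atBot.mono_right atBot_le_cocompact)
  have htop := hhor.mono_left atTop_le_cocompact
  have hlim := ((hbot.sub htop).add ((hvert hb).const_smul I)).sub ((hvert ha).const_smul I)
  have hconst : Tendsto (fun T : ℝ => rectIntegral ⟨a, -T⟩ ⟨b, T⟩ f) atTop (𝓝 r) :=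
    tendsto_const_nhds.congr' <| (eventually_gt_atTop 0).mono fun T hT => (hrect T hT).symm
  simp only [rectIntegral, wedgeIntegral_add_wedgeIntegral_eq] at hconst
  rw [← tendsto_nhds_unique hlim hconst, sub_zero, zero_add, smul_sub]

end RectangleIntegral

section LatticeSum

variable {n : ℕ} {s : ℂ} {a r : ℝ}

/-- The lattice sum `∑_{k ∈ ℤ} 1 / (s + k) ^ (n + 1)`. -/
def latticeSum (n : ℕ) (s : ℂ) : ℂ := ∑' k : ℤ, 1 / (s + k) ^ (n + 1)

/-- The lattice sum with its polar part `1 / s ^ (n + 1)` removed, so that it is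
holomorphic near `s = 0`. -/
def regLatticeSum (n : ℕ) (s : ℂ) : ℂ := ∑' k : ℤ, if k = 0 then 0 else 1 / (s + k) ^ (n + 1)

lemma summable_latticeSum (hn : 0 < n) (s : ℂ) :
    Summable fun k : ℤ => 1 / (s + k) ^ (n + 1) := by
  have hsum := EisensteinSeries.linear_right_summable s 1 (k := (n + 1 : ℕ)) (by norm_cast; lia)
  simpa only [zpow_natCast, Int.cast_one, one_mul, one_div] using hsum

lemma latticeSum_add_intCast (n : ℕ) (s : ℂ) (m : ℤ) : latticeSum n (s + m) = latticeSum n s := by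
  unfold latticeSum
  rw [← (Equiv.addLeft m).tsum_eq (fun k : ℤ => 1 / (s + k) ^ (n + 1))]
  simp [add_assoc]

lemma latticeSum_fract_add (n : ℕ) (a : ℝ) (s : ℂ) :
    latticeSum n (Int.fract a + s) = latticeSum n (a + s) := by
  rw [← latticeSum_add_intCast n (Int.fract a + s) ⌊a⌋, add_right_comm]
  norm_cast
  rw [Int.fract_add_floor]

lemma latticeSum_neg (n : ℕ) (s : ℂ) :
    latticeSum n (-s) = (-1) ^ (n + 1) * latticeSum n s := by
  unfold latticeSum
  rw [← tsum_mul_left, ← (Equiv.neg ℤ).tsum_eq (fun k : ℤ => 1 / (-s + k) ^ (n + 1))]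
  refine tsum_congr fun k => ?_
  rw [Equiv.neg_apply, Int.cast_neg, ← neg_add, neg_pow, ← div_div, one_div, ← inv_pow,
    inv_neg_one, mul_one_div]

lemma latticeSum_eq_polar_add_regLatticeSum (hn : 0 < n) (s : ℂ) :
    latticeSum n s = 1 / s ^ (n + 1) + regLatticeSum n s := by
  unfold latticeSum regLatticeSum
  rw [(summable_latticeSum hn s).tsum_eq_add_tsum_ite 0]
  simp

lemma mul_abs_intCast_le_norm_add (hs : |s.re| ≤ r) (k : ℤ) :
    (1 - r) * |(k : ℝ)| ≤ ‖s + k‖ := by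
  rcases eq_or_ne k 0 with rfl | hk
  · simp
  have hk1 : (1 : ℝ) ≤ |(k : ℝ)| := by exact_mod_cast Int.one_le_abs hk
  have hre : |(k : ℝ)| ≤ |s.re + k| + |s.re| := by
    simpa using abs_sub (s.re + k) s.re
  calc (1 - r) * |(k : ℝ)| ≤ |s.re + k| := by nlinarith [(abs_nonneg s.re).trans hs]
    _ ≤ ‖s + k‖ := by simpa using abs_re_le_norm (s + k)

lemma norm_one_div_add_intCast_pow_le (hr : r < 1) (hs : |s.re| ≤ r) {k : ℤ} (hk : k ≠ 0)
    (m : ℕ) : ‖1 / (s + k) ^ m‖ ≤ 1 / (1 - r) ^ m * ‖1 / (k : ℝ) ^ m‖ := by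
  have hpos : 0 < (1 - r) * |(k : ℝ)| :=
    mul_pos (by linarith) (abs_pos.mpr (by exact_mod_cast hk))
  rw [norm_div, norm_pow, norm_div, norm_pow, norm_one, norm_one, norm_eq_abs,
    div_mul_div_comm, one_mul, ← mul_pow]
  gcongr
  exact mul_abs_intCast_le_norm_add hs k

lemma add_intCast_ne_zero (hs : |s.re| < 1) {k : ℤ} (hk : k ≠ 0) : s + k ≠ 0 := by
  refine norm_pos_iff.mp (lt_of_lt_of_le ?_ (mul_abs_intCast_le_norm_add le_rfl k))
  exact mul_pos (by linarith) (abs_pos.mpr (by exact_mod_cast hk))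

lemma differentiableOn_regLatticeSum (hn : 0 < n) :
    DifferentiableOn ℂ (regLatticeSum n) {s | |s.re| < 1} := by
  have hopen (r : ℝ) : IsOpen {s : ℂ | |s.re| < r} := isOpen_lt (by fun_prop) continuous_const
  suffices h : ∀ r < 1, DifferentiableOn ℂ (regLatticeSum n) {s | |s.re| < r} by
    intro s hs
    obtain ⟨r, hsr, hr⟩ := exists_between (show |s.re| < 1 from hs)
    exact ((h r hr).differentiableAt ((hopen r).mem_nhds hsr)).differentiableWithinAt
  intro r hr
  have hsum : Summable fun k : ℤ => 1 / (1 - r) ^ (n + 1) * ‖1 / (k : ℝ) ^ (n + 1)‖ :=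
    (Real.summable_one_div_int_pow.mpr (by lia)).norm.mul_left _
  refine differentiableOn_tsum_of_summable_norm hsum (fun k => ?_) (hopen r) fun k s hs => ?_ <;>
    rcases eq_or_ne k 0 with rfl | hk
  · simp
  · simp only [hk, if_false]
    intro s hs
    refine DifferentiableAt.differentiableWithinAt ?_
    fun_prop (disch := exact pow_ne_zero _ (add_intCast_ne_zero (hs.trans hr) hk))
  · simp
  · rw [if_neg hk]
    exact norm_one_div_add_intCast_pow_le hr hs.le hk _

lemma exists_norm_latticeSum_le_of_one_le_im (hn : 0 < n) :
    ∃ C : ℝ, ∀ s : ℂ, 1 ≤ s.im → ‖latticeSum n s‖ ≤ C * rexp (-s.im) := by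
  have hsum : Summable fun m : ℕ => (m : ℝ) ^ n * rexp (-1 * m) := by
    simpa using Real.summable_pow_mul_exp_neg_nat_mul n one_pos
  refine ⟨‖((-2 * π * I) ^ (n + 1) / n.factorial : ℂ)‖ * ∑' m : ℕ, (m : ℝ) ^ n * rexp (-1 * m),
    fun s hs => ?_⟩
  have hfourier := EisensteinSeries.qExpansion_identity hn ⟨s, by linarith⟩
  change latticeSum n s = _ at hfourier
  rw [hfourier, norm_mul, mul_assoc ‖_‖, ← tsum_mul_right]
  refine mul_le_mul_of_nonneg_left
    (tsum_of_norm_bounded (hsum.mul_right _).hasSum fun m => ?_) (norm_nonneg _)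
  -- The `q`-expansion has no constant term, which is what gives the exponential decay.
  rcases Nat.eq_zero_or_pos m with rfl | hm
  · simp [hn.ne']
  rw [norm_mul, norm_pow, norm_pow, Complex.norm_exp, Complex.norm_natCast, mul_assoc (_ ^ n),
    ← Real.exp_nat_mul, ← Real.exp_add]
  have hm1 : (1 : ℝ) ≤ m := by exact_mod_cast hm
  have hexp : (m : ℝ) * -(2 * π * s.im) ≤ -1 * m + -s.im := by
    nlinarith [mul_le_mul_of_nonneg_right pi_gt_three.le (by positivity : 0 ≤ m * s.im)]
  gcongr
  simpa using hexp

lemma exists_norm_latticeSum_le (hn : 0 < n) :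
    ∃ C : ℝ, ∀ s : ℂ, 1 ≤ |s.im| → ‖latticeSum n s‖ ≤ C * rexp (-|s.im|) := by
  obtain ⟨C, hC⟩ := exists_norm_latticeSum_le_of_one_le_im hn
  refine ⟨C, fun s hs => ?_⟩
  have hneg : ‖latticeSum n (-s)‖ = ‖latticeSum n s‖ := by simp [latticeSum_neg]
  rcases abs_cases s.im with ⟨him, -⟩ | ⟨him, -⟩ <;> rw [him] at hs ⊢
  · exact hC s hs
  · simpa [hneg] using hC (-s) (by simpa using hs)

lemma exists_norm_pow_mul_latticeSum_le (hn : 0 < n) (j : ℕ) (r : ℝ) :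
    ∃ C : ℝ, ∀ s : ℂ, |s.re| ≤ r → 1 ≤ |s.im| →
      ‖s ^ j * latticeSum n s‖ ≤ C * (1 + s.im ^ 2)⁻¹ := by
  obtain ⟨C, hC⟩ := exists_norm_latticeSum_le hn
  refine ⟨C * ((j + 2).factorial * rexp (r + 1)), fun s hre him => ?_⟩
  have hr : 0 ≤ r := (abs_nonneg _).trans hre
  have hC0 : 0 ≤ C * rexp (-|s.im|) := (norm_nonneg _).trans (hC s him)
  have hnorm : ‖s‖ ≤ r + 1 + |s.im| := (norm_le_abs_re_add_abs_im s).trans (by linarith)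
  have hsq : 1 + s.im ^ 2 ≤ (r + 1 + |s.im|) ^ 2 := by
    nlinarith [sq_abs s.im, abs_nonneg s.im]
  have hpow : (r + 1 + |s.im|) ^ (j + 2) ≤ (j + 2).factorial * rexp (r + 1 + |s.im|) := by
    have := Real.pow_div_factorial_le_exp (r + 1 + |s.im|) (by positivity) (j + 2)
    rwa [div_le_iff₀' (by positivity)] at this
  rw [← div_eq_mul_inv, le_div_iff₀ (by positivity), norm_mul, norm_pow]
  calc ‖s‖ ^ j * ‖latticeSum n s‖ * (1 + s.im ^ 2)
      ≤ (r + 1 + |s.im|) ^ j * (C * rexp (-|s.im|)) * (r + 1 + |s.im|) ^ 2 := by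
        gcongr
        exact hC s him
    _ = C * rexp (-|s.im|) * (r + 1 + |s.im|) ^ (j + 2) := by ring
    _ ≤ C * rexp (-|s.im|) * ((j + 2).factorial * rexp (r + 1 + |s.im|)) := by gcongr
    _ = C * ((j + 2).factorial * (rexp (r + 1 + |s.im|) * rexp (-|s.im|))) := by ring
    _ = C * ((j + 2).factorial * rexp (r + 1)) := by rw [← Real.exp_add, add_neg_cancel_right]

lemma continuousOn_latticeSum (hn : 0 < n) :
    ContinuousOn (latticeSum n) ({s | |s.re| < 1} \ {0}) := by
  rw [funext (latticeSum_eq_polar_add_regLatticeSum hn)]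
  exact (continuousOn_const.div (by fun_prop) fun s hs => pow_ne_zero _ hs.2).add
    ((differentiableOn_regLatticeSum hn).continuousOn.mono Set.sdiff_subset)

lemma continuous_latticeSum_vertical (hn : 0 < n) (ha : Int.fract a ≠ 0) :
    Continuous fun y : ℝ => latticeSum n (a + y * I) := by
  simp_rw [← latticeSum_fract_add n a]
  refine (continuousOn_latticeSum hn).comp_continuous (by fun_prop) fun y => ⟨?_, fun h0 => ha ?_⟩
  · simpa [abs_of_nonneg (Int.fract_nonneg a)] using Int.fract_lt_one a
  · simpa using congrArg re h0

lemma integrable_pow_mul_latticeSum_vertical (hn : 0 < n) (ha : Int.fract a ≠ 0) (j : ℕ) :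
    Integrable fun y : ℝ => (a + y * I : ℂ) ^ j * latticeSum n (a + y * I) := by
  obtain ⟨C, hC⟩ := exists_norm_pow_mul_latticeSum_le hn j |a|
  have hcont : Continuous fun y : ℝ => (a + y * I : ℂ) ^ j * latticeSum n (a + y * I) :=
    Continuous.mul (by fun_prop) (continuous_latticeSum_vertical hn ha)
  refine hcont.locallyIntegrable.integrable_of_isBigO_cocompact
    (g := fun y : ℝ => (1 + y ^ 2)⁻¹) (.of_bound C ?_)
    (integrable_inv_one_add_sq.integrableAtFilter _)
  filter_upwards [tendsto_norm_cocompact_atTop.eventually_ge_atTop 1] with y hy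
  rw [Real.norm_of_nonneg (by positivity : 0 ≤ (1 + y ^ 2)⁻¹)]
  simpa using hC (a + y * I) (by simp) (by simpa using hy)

lemma integrable_eval_mul_latticeSum_vertical (hn : 0 < n) (ha : Int.fract a ≠ 0)
    (R : Polynomial ℂ) :
    Integrable fun y : ℝ => R.eval (a + y * I : ℂ) * latticeSum n (a + y * I) := by
  induction R using Polynomial.induction_on' with
  | add p q hp hq =>
    simp only [Polynomial.eval_add, add_mul]
    exact hp.add hq
  | monomial j c =>
    simpa [mul_assoc] using (integrable_pow_mul_latticeSum_vertical hn ha j).const_mul c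

lemma tendsto_integral_horizontal_pow_mul_latticeSum (hn : 0 < n) (j : ℕ) (a b : ℝ) :
    Tendsto (fun T : ℝ => ∫ x in a..b, (x + T * I : ℂ) ^ j * latticeSum n (x + T * I))
      (cocompact ℝ) (𝓝 0) := by
  obtain ⟨C, hC⟩ := exists_norm_pow_mul_latticeSum_le hn j (max |a| |b|)
  have hsq : Tendsto (fun T : ℝ => 1 + T ^ 2) (cocompact ℝ) atTop := by
    simpa using tendsto_atTop_add_const_left _ 1
      ((tendsto_pow_atTop two_ne_zero).comp (tendsto_norm_cocompact_atTop (E := ℝ)))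
  have hlim : Tendsto (fun T : ℝ => C * (1 + T ^ 2)⁻¹ * |b - a|) (cocompact ℝ) (𝓝 0) := by
    simpa using (hsq.inv_tendsto_atTop.const_mul C).mul_const |b - a|
  refine squeeze_zero_norm' ?_ hlim
  filter_upwards [tendsto_norm_cocompact_atTop.eventually_ge_atTop 1] with T hT
  refine intervalIntegral.norm_integral_le_of_norm_le_const fun x hx => ?_
  have hxab : |x| ≤ max |a| |b| := (abs_le_max_abs_abs hx.1.le hx.2).trans
    (max_le abs_min_le_max_abs_abs abs_max_le_max_abs_abs)
  simpa using hC (x + T * I) (by simpa using hxab) (by simpa using hT)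

lemma rectIntegral_pow_mul_latticeSum (hn : 0 < n) (j : ℕ) {z w : ℂ}
    (hz : z.re ∈ Set.Ioo (-1) 0 ∧ z.im < 0) (hw : w.re ∈ Set.Ioo 0 1 ∧ 0 < w.im) :
    rectIntegral z w (fun s => s ^ j * latticeSum n s) = if j = n then 2 * π * I else 0 := by
  have hzw := zero_notMem_wedgeSides hz.2.ne hw.1.1.ne'
  have hwz := zero_notMem_wedgeSides hw.2.ne' hz.1.2.ne
  have hne : ∀ s ∈ wedgeSides z w ∪ wedgeSides w z, s ≠ 0 := fun s hs =>
    ne_of_mem_of_not_mem hs (not_or.mpr ⟨hzw, hwz⟩)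
  have hpolar : Set.EqOn (fun s => s ^ j * latticeSum n s)
      (fun s => s ^ ((j : ℤ) - (n + 1 : ℕ)) + s ^ j * regLatticeSum n s)
      (wedgeSides z w ∪ wedgeSides w z) := by
    intro s hs
    simp only [latticeSum_eq_polar_add_regLatticeSum hn, zpow_sub₀ (hne s hs), zpow_natCast]
    ring
  have hreg : DifferentiableOn ℂ (fun s => s ^ j * regLatticeSum n s) (Rectangle z w) := by
    refine DifferentiableOn.mul (by fun_prop) ((differentiableOn_regLatticeSum hn).mono ?_)
    rintro s ⟨hs, -⟩
    have hre := (Set.uIcc_of_le (hz.1.2.trans hw.1.1).le).subset hs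
    exact abs_lt.mpr ⟨hz.1.1.trans_le hre.1, hre.2.trans_lt hw.1.2⟩
  have hcont : ContinuousOn (fun s : ℂ => s ^ ((j : ℤ) - (n + 1 : ℕ)))
      (wedgeSides z w ∪ wedgeSides w z) :=
    continuousOn_id.zpow₀ _ fun s hs => Or.inl (hne s hs)
  rw [rectIntegral_congr hpolar, rectIntegral_add hcont
    (hreg.continuousOn.mono (wedgeSides_union_wedgeSides_subset_rectangle z w)),
    rectIntegral_eq_zero_of_differentiableOn hreg, add_zero]
  split_ifs with hj
  · rw [hj, ← rectIntegral_inv ⟨hz.1.2, hz.2⟩ ⟨hw.1.1, hw.2⟩]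
    simp
  · exact rectIntegral_zpow_of_ne_neg_one hzw hwz (by lia)

lemma fract_ne_zero_of_mem_Ioo (ha : a ∈ Set.Ioo 0 1) : Int.fract a ≠ 0 := by
  rw [Int.fract_eq_self.mpr ⟨ha.1.le, ha.2⟩]
  exact ha.1.ne'

lemma integral_pow_mul_latticeSum_sub (hn : 0 < n) (j : ℕ) (ha : a ∈ Set.Ioo 0 1) :
    I * ((∫ y : ℝ, (a + y * I : ℂ) ^ j * latticeSum n (a + y * I)) -
      ∫ y : ℝ, ((a - 1 : ℝ) + y * I : ℂ) ^ j * latticeSum n ((a - 1 : ℝ) + y * I)) =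
      if j = n then 2 * π * I else 0 := by
  have hfract : Int.fract a ≠ 0 := fract_ne_zero_of_mem_Ioo ha
  refine integral_vertical_sub_of_rectIntegral_eq
    (integrable_pow_mul_latticeSum_vertical hn (by simpa using hfract) j)
    (integrable_pow_mul_latticeSum_vertical hn hfract j)
    (tendsto_integral_horizontal_pow_mul_latticeSum hn j _ _) fun T hT =>
      rectIntegral_pow_mul_latticeSum hn j ⟨⟨?_, ?_⟩, ?_⟩ ⟨ha, hT⟩ <;> simp [ha.1, ha.2, hT]

lemma integral_eval_mul_latticeSum_sub (hn : 0 < n) (R : Polynomial ℂ) (ha : a ∈ Set.Ioo 0 1) :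
    I * ((∫ y : ℝ, R.eval (a + y * I : ℂ) * latticeSum n (a + y * I)) -
      ∫ y : ℝ, R.eval ((a - 1 : ℝ) + y * I : ℂ) * latticeSum n ((a - 1 : ℝ) + y * I)) =
      2 * π * I * R.coeff n := by
  have hfract : Int.fract a ≠ 0 := fract_ne_zero_of_mem_Ioo ha
  have hfract' : Int.fract (a - 1) ≠ 0 := by simpa using hfract
  induction R using Polynomial.induction_on' with
  | add p q hp hq =>
    simp only [Polynomial.eval_add, add_mul, Polynomial.coeff_add, mul_add, ← hp, ← hq]
    rw [integral_add (integrable_eval_mul_latticeSum_vertical hn hfract p)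
        (integrable_eval_mul_latticeSum_vertical hn hfract q),
      integral_add (integrable_eval_mul_latticeSum_vertical hn hfract' p)
        (integrable_eval_mul_latticeSum_vertical hn hfract' q)]
    ring
  | monomial j c =>
    have h := integral_pow_mul_latticeSum_sub hn j ha
    simp only [Polynomial.eval_monomial, mul_assoc, integral_const_mul, ← mul_sub,
      Polynomial.coeff_monomial]
    rw [mul_left_comm, h]
    split_ifs <;> ring

lemma integral_eval_sub_eval_sub_one_mul_latticeSum (hn : 0 < n) (R : Polynomial ℂ)
    (ha : a ∈ Set.Ioo 0 1) :
    I * ∫ y : ℝ, (R.eval (a + y * I : ℂ) - R.eval (a + y * I - 1 : ℂ)) *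
      latticeSum n (a + y * I) = 2 * π * I * R.coeff n := by
  have hfract : Int.fract a ≠ 0 := fract_ne_zero_of_mem_Ioo ha
  have hperiod (y : ℝ) : (R.eval (a + y * I : ℂ) - R.eval (a + y * I - 1 : ℂ)) *
      latticeSum n (a + y * I) = R.eval (a + y * I : ℂ) * latticeSum n (a + y * I) -
        R.eval ((a - 1 : ℝ) + y * I : ℂ) * latticeSum n ((a - 1 : ℝ) + y * I) := by
    rw [← latticeSum_add_intCast n ((a - 1 : ℝ) + y * I) 1,
      show ((a - 1 : ℝ) + y * I + (1 : ℤ) : ℂ) = a + y * I by push_cast; ring,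
      show (a + y * I - 1 : ℂ) = (a - 1 : ℝ) + y * I by push_cast; ring, sub_mul]
  simp_rw [hperiod]
  rw [integral_sub (integrable_eval_mul_latticeSum_vertical hn hfract R)
    (integrable_eval_mul_latticeSum_vertical hn (by simpa using hfract) R)]
  exact integral_eval_mul_latticeSum_sub hn R ha

lemma integral_pow_mul_latticeSum {w : ℕ} (hn : 0 < n) (hnw : n ≤ w) (ha : Int.fract a ≠ 0)
    (q : ℂ) :
    I * ∫ y : ℝ, (y * I - q) ^ w * latticeSum n (a + y * I) =
      2 * π * I * (w.choose n * bpoly (w - n + 1) (Int.fract (-a) - q) / (w - n + 1)) := by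
  rw [Int.fract_neg ha]
  rw [← bernoulliAntidiff_coeff hnw, ← integral_eval_sub_eval_sub_one_mul_latticeSum hn _
    ⟨(Int.fract_nonneg a).lt_of_ne' ha, Int.fract_lt_one a⟩]
  simp_rw [bernoulliAntidiff_eval_sub, latticeSum_fract_add]
  congr! 5
  push_cast
  ring

lemma integrable_pow_mul_latticeSum (hn : 0 < n) (w : ℕ) (ha : Int.fract a ≠ 0) (q : ℂ) :
    Integrable fun y : ℝ => (y * I - q) ^ w * latticeSum n (a + y * I) := by
  have hint := integrable_eval_mul_latticeSum_vertical hn ha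
    ((Polynomial.X - Polynomial.C (a + q)) ^ w)
  simpa only [Polynomial.eval_pow, Polynomial.eval_sub, Polynomial.eval_X, Polynomial.eval_C,
    add_sub_add_left_eq_sub] using hint

end LatticeSum

section ImaginaryAxis

lemma integral_Ioi_comp_one_div_mul {E : Type*} [NormedAddCommGroup E] [NormedSpace ℝ E]
    (g : ℝ → E) {K : ℝ} (hK : 0 < K) :
    ∫ y in Set.Ioi (0 : ℝ), (1 / y ^ 2) • g (1 / (K * y)) = K • ∫ t in Set.Ioi (0 : ℝ), g t := by
  have hinv := integral_comp_rpow_Ioi (fun t : ℝ => g (K⁻¹ * t)) (p := -1) (by norm_num)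
  have hscale := integral_comp_mul_left_Ioi g 0 (inv_pos.mpr hK)
  rw [mul_zero, inv_inv] at hscale
  rw [← hscale, ← hinv]
  refine setIntegral_congr_fun measurableSet_Ioi fun y (hy : 0 < y) => ?_
  have hpow : y ^ (-1 - 1 : ℝ) = 1 / y ^ 2 := by
    rw [show (-1 - 1 : ℝ) = -(2 : ℕ) by norm_num, Real.rpow_neg hy.le, Real.rpow_natCast, one_div]
  simp only [hpow, Real.rpow_neg_one, abs_neg, abs_one, one_mul, one_div, mul_inv]

lemma intI_congr {F G : ℂ → ℂ} (hFG : ∀ z ≠ 0, F z = G z) : intI F = intI G := by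
  refine congrArg (I * ·) (setIntegral_congr_fun measurableSet_Ioi fun y (hy : 0 < y) => hFG _ ?_)
  exact mul_ne_zero I_ne_zero (by exact_mod_cast hy.ne')

lemma intI_const_mul (a : ℂ) (F : ℂ → ℂ) : intI (fun z => a * F z) = a * intI F := by
  rw [intI, integral_const_mul, mul_left_comm, intI]

lemma intI_comp_one_div_mul (g : ℂ → ℂ) {K : ℝ} (hK : 0 < K) :
    intI (fun z => 1 / z ^ 2 * g (1 / (K * z))) = -K * intI (fun z => g (-z)) := by
  have hsub := integral_Ioi_comp_one_div_mul (fun t => -g (-(I * t))) hK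
  have hcongr (y : ℝ) : 1 / (I * y) ^ 2 * g (1 / (K * (I * y))) =
      (1 / y ^ 2) • -g (-(I * (1 / (K * y) : ℝ))) := by
    rw [real_smul, show 1 / (K * (I * y) : ℂ) = -(I * (1 / (K * y) : ℝ)) by
      push_cast; rw [mul_left_comm, ← div_div, one_div I, inv_I]; ring, mul_pow, I_sq]
    push_cast
    ring
  rw [intI, funext hcongr, hsub, integral_neg, real_smul, intI]
  ring

lemma intI_add_intI_comp_neg {g : ℂ → ℂ} (hg : Integrable fun y : ℝ => g (y * I)) :
    intI (fun z => g (-z)) + intI g = I * ∫ y : ℝ, g (y * I) := by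
  have hneg := integral_comp_neg_Ioi 0 fun y : ℝ => g (y * I)
  rw [neg_zero] at hneg
  rw [← intervalIntegral.integral_Iic_add_Ioi hg.integrableOn hg.integrableOn (b := 0), ← hneg,
    intI, intI, mul_add]
  congr! 5 <;> simp [mul_comm]

end ImaginaryAxis

section TwistedSeries

variable {N D w n : ℕ} {c : ℤ}

lemma not_dvd_of_dvd_mul_sub_one {R : Type*} [CommRing R] {d a b : R} (hd : ¬IsUnit d)
    (hab : d ∣ a * b - 1) : ¬d ∣ a := fun hda =>
  hd (isUnit_of_dvd_one ((dvd_sub_right (hda.mul_right b)).mp hab))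

lemma fract_intCast_div_natCast_ne_zero (hD : D ≠ 0) (hc : ¬(D : ℤ) ∣ c) :
    Int.fract ((c : ℝ) / D) ≠ 0 := by
  intro h0
  obtain ⟨m, hm⟩ := Int.fract_eq_zero_iff.mp h0
  rw [eq_div_iff (by exact_mod_cast hD)] at hm
  exact hc ⟨m, by rw [mul_comm]; exact_mod_cast hm.symm⟩

lemma S3_eq_latticeSum (hN : N ≠ 0) (hD : D ≠ 0) {z : ℂ} (hz : z ≠ 0) :
    S3 N D w n c z = 2 / ((D * z) ^ (w - n + 1) * (D * N * z) ^ (n + 1)) *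
      latticeSum n (c / D + 1 / (D ^ 2 * N * z)) := by
  have hN' : (N : ℂ) ≠ 0 := by exact_mod_cast hN
  have hD' : (D : ℂ) ≠ 0 := by exact_mod_cast hD
  rw [S3, latticeSum, ← tsum_mul_left, ← tsum_mul_left]
  refine tsum_congr fun k => ?_
  rw [show ((c : ℂ) + k * D) * N * z + 1 / D =
    (D * N * z) * (c / D + 1 / (D ^ 2 * N * z) + k) by field_simp; ring, mul_pow _ (_ + _)]
  field_simp

lemma S3_mul_pow (hN : N ≠ 0) (hD : D ≠ 0) (hnw : n ≤ w) {X z : ℂ} (hX : X ≠ 0) (hz : z ≠ 0) :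
    S3 N D w n c z * (X - z) ^ w =
      2 * N ^ (w - n) * D ^ w * X ^ w / (D ^ 2 * N) * (1 / z ^ 2 *
        ((1 / (D ^ 2 * N * z) - 1 / (D ^ 2 * N * X)) ^ w *
          latticeSum n (c / D + 1 / (D ^ 2 * N * z)))) := by
  have hN' : (N : ℂ) ≠ 0 := by exact_mod_cast hN
  have hD' : (D : ℂ) ≠ 0 := by exact_mod_cast hD
  obtain ⟨m, rfl⟩ := Nat.exists_eq_add_of_le hnw
  rw [S3_eq_latticeSum hN hD hz, Nat.add_sub_cancel_left,
    show 1 / ((D : ℂ) ^ 2 * N * z) - 1 / (D ^ 2 * N * X) = (X - z) / (D ^ 2 * N * z * X) by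
      field_simp, div_pow]
  field_simp
  ring

lemma intI_S3_mul_pow (hN : N ≠ 0) (hD : D ≠ 0) (hnw : n ≤ w) {X : ℂ} (hX : X ≠ 0) :
    intI (fun z => S3 N D w n c z * (X - z) ^ w) = -(2 * N ^ (w - n) * D ^ w * X ^ w) *
      intI (fun u => (-u - 1 / (D ^ 2 * N * X)) ^ w * latticeSum n (c / D + -u)) := by
  have hK : 0 < (D : ℝ) ^ 2 * N := by positivity
  have hK' : (D : ℂ) ^ 2 * N ≠ 0 := by exact_mod_cast hK.ne'
  have hsub := intI_comp_one_div_mul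
    (fun u => (u - 1 / (D ^ 2 * N * X)) ^ w * latticeSum n (c / D + u)) hK
  push_cast at hsub
  rw [intI_congr fun z hz => S3_mul_pow hN hD hnw hX hz, intI_const_mul, hsub,
    ← mul_assoc, mul_neg, div_mul_cancel₀ _ hK']

lemma intI_S3_neg_mul_pow (hN : N ≠ 0) (hD : D ≠ 0) (hnw : n ≤ w) {X : ℂ} (hX : X ≠ 0) :
    intI (fun z => S3 N D w n (-c) z * (-X - z) ^ w) =
      (-1) ^ (n + 1) * (-(2 * N ^ (w - n) * D ^ w * X ^ w) *
        intI (fun u => (u - 1 / (D ^ 2 * N * X)) ^ w * latticeSum n (c / D + u))) := by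
  have hreflect (u : ℂ) :
      (-u - 1 / (D ^ 2 * N * -X)) ^ w * latticeSum n ((-c : ℤ) / D + -u) =
        (-1) ^ w * (-1) ^ (n + 1) *
          ((u - 1 / (D ^ 2 * N * X)) ^ w * latticeSum n (c / D + u)) := by
    rw [show -u - 1 / (D ^ 2 * N * -X) = -1 * (u - 1 / (D ^ 2 * N * X)) by
        rw [mul_neg, div_neg]; ring, mul_pow,
      show ((-c : ℤ) / D + -u : ℂ) = -(c / D + u) by push_cast; ring, latticeSum_neg]
    ring
  have hsign : (-1 : ℂ) ^ w * (-1) ^ w = 1 := by rw [← mul_pow]; norm_num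
  rw [intI_S3_mul_pow hN hD hnw (neg_ne_zero.mpr hX), intI_congr fun u _ => hreflect u,
    intI_const_mul, neg_pow X]
  linear_combination (-(2 * N ^ (w - n) * D ^ w * X ^ w) * (-1) ^ (n + 1) *
    intI (fun u => (u - 1 / (D ^ 2 * N * X)) ^ w * latticeSum n (c / D + u))) * hsign

lemma cconst_mul (hn : 0 < n) :
    cconst w n * (-1) ^ (n - 1) * (2 * I) ^ (w + 1) = -(4 * π * I * w.choose n) := by
  have hpow : (2 * I : ℂ) ^ (-(w : ℤ) - 1) * (2 * I) ^ (w + 1) = 1 := by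
    rw [← zpow_natCast, ← zpow_add₀ (by simp)]
    simp
  have hsign : (-1 : ℂ) ^ n * (-1) ^ (n - 1) = -1 := by
    rw [← pow_add]
    exact Odd.neg_one_pow ⟨n - 1, by lia⟩
  unfold cconst
  linear_combination ((-1) ^ n * (-1) ^ (n - 1) * 4 * π * I * w.choose n) * hpow +
    (4 * π * I * w.choose n) * hsign

theorem F3_eval_general (hN : N ≠ 0) (hn : 0 < n) (hnw : n ≤ w) (hD : D ≠ 0)
    (hc : ¬(D : ℤ) ∣ c) {X : ℂ} (hX : X ≠ 0) :
    intI (fun z => S3 N D w n c z * (X - z) ^ w) +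
      (-1 : ℂ) ^ (n - 1) * intI (fun z => S3 N D w n (-c) z * (-X - z) ^ w) =
    cconst w n * (-1) ^ (n - 1) * (2 * Complex.I) ^ (w + 1) * (N : ℂ) ^ (w - n) *
      (D : ℂ) ^ w * X ^ w *
      bpoly (w - n + 1) (((Int.fract (-(c : ℝ) / D) : ℝ) : ℂ) - 1 / (D ^ 2 * N * X)) /
      (w - n + 1) := by
  have hfract := fract_intCast_div_natCast_ne_zero hD hc
  have hint := integrable_pow_mul_latticeSum hn w hfract (1 / (D ^ 2 * N * X))
  have hresidue := integral_pow_mul_latticeSum hn hnw hfract (1 / (D ^ 2 * N * X))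
  push_cast at hint hresidue
  have hsign : (-1 : ℂ) ^ (n - 1) * (-1) ^ (n + 1) = 1 := by
    rw [← pow_add]
    exact Even.neg_one_pow ⟨n, by lia⟩
  rw [intI_S3_mul_pow hN hD hnw hX, intI_S3_neg_mul_pow hN hD hnw hX, ← mul_assoc, hsign, one_mul,
    ← mul_add, intI_add_intI_comp_neg
      (g := fun u => (u - 1 / (D ^ 2 * N * X)) ^ w * latticeSum n (c / D + u)) hint,
    hresidue, cconst_mul hn, neg_div]
  ring

end TwistedSeries

/-- the twisted period-polynomial contribution of the matrices with
top row `±(D, −h)` (for `gcd(N,D) = 1`): for `0 < n < w`, `gcd(h,D) = 1`, `cNh ≡ 1 (mod D)`,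
and nonzero `X`,
`F_{3,h}(X) = c_n·(−1)^{n−1}·(2i)^{w+1}·N^{ñ}·D^w·X^w·B_{ñ+1}({−c/D} − 1/(D²NX))/(ñ+1)`. -/
theorem F3_eval (N : ℕ) (hN : 1 ≤ N) (w : ℕ) (hw : 2 ≤ w) (hwe : Even w)
    (n : ℕ) (hn0 : 0 < n) (hnw : n < w) (D : ℕ) (hD : 1 < D) (hND : Nat.gcd N D = 1)
    (h : ℤ) (hh : Int.gcd h D = 1) (c : ℤ) (hc : (D : ℤ) ∣ (c * N * h - 1))
    (X : ℂ) (hX : X ≠ 0) :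
    intI (fun z => S3 N D w n c z * (X - z) ^ w) +
      (-1 : ℂ) ^ (n - 1) * intI (fun z => S3 N D w n (-c) z * (X + z) ^ w) =
    cconst w n * (-1) ^ (n - 1) * (2 * Complex.I) ^ (w + 1) * (N : ℂ) ^ (w - n) *
      (D : ℂ) ^ w * X ^ w *
      bpoly (w - n + 1) (((Int.fract (-(c : ℝ) / D) : ℝ) : ℂ) - 1 / (D ^ 2 * N * X)) /
      (w - n + 1) := by
  have hDc : ¬(D : ℤ) ∣ c :=
    not_dvd_of_dvd_mul_sub_one (by simpa [Int.isUnit_iff] using by lia) (mul_assoc c N h ▸ hc)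
  have heven (z : ℂ) : (X + z) ^ w = (-X - z) ^ w := by rw [← neg_add', hwe.neg_pow]
  simpa only [heven] using F3_eval_general (by lia) hn0 hnw.le (by lia) hDc hX

end
end

section
/- Let N ≥ 1, let w ≥ 2 be even, let n be an integer with 0 < n < w, set ñ = w − n, let D > 1 and let h be an integer. Let S_{6,h}(z) = Σ_{(a b; c d) ∈ Γ₀(N), ac(ah/D+b)(ch/D+d) > 0} 1/((az + ah/D + b)^{ñ+1}·(cz + ch/D + d)^{n+1}). Then for every integer m with 0 < m < w: ∫_{−i∞}^{i∞} S_{6,h}(z)·z^m dz = 0. -/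
open MeasureTheory Complex Real

noncomputable section

/-- `S_{6,h}(z)`: the sub-sum of the series defining `R_n` over matrices
`(a b; c d) ∈ Γ₀(N)` with `ac(ah/D+b)(ch/D+d) > 0`. -/
def S6 (N D w n : ℕ) (h : ℤ) (z : ℂ) : ℂ :=
  ∑' p : ℤ × ℤ × ℤ × ℤ,
    if p.1 * p.2.2.2 - p.2.1 * p.2.2.1 = 1 ∧ (N : ℤ) ∣ p.2.2.1 ∧
        0 < (p.1 : ℝ) * p.2.2.1 * ((p.1 : ℝ) * h / D + p.2.1) *
          ((p.2.2.1 : ℝ) * h / D + p.2.2.2) then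
      1 / (((p.1 : ℂ) * z + (p.1 : ℂ) * h / D + p.2.1) ^ (w - n + 1) *
          ((p.2.2.1 : ℂ) * z + (p.2.2.1 : ℂ) * h / D + p.2.2.2) ^ (n + 1))
    else 0

/-!
A summand of `S6` times `z ^ m` is a rational function whose poles `-x / a` and `-y / c`, with
`x = a h / D + b` and `y = c h / D + d`, are real and of the same sign. It is thus holomorphic on
one of the two closed half-planes bounded by the imaginary axis and `O(|z| ^ (-2))` there, so moving
the contour to infinity shows that its integral vanishes.

To integrate term by term, `|c t i + y| ^ 2 ≥ 2 |c y t|` bounds the `L¹` norm of a summand on the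
imaginary axis by a constant multiple of `1 / |a x c y|`. The nonzero integers `a`, `X = D x`, `c`,
`Y = D y` satisfy `a Y - X c = D`, so each is determined by the other three. By the AM-GM inequality
`1 / |a X c Y|` is at most the mean of the four numbers `1 / |X c Y| ^ (4 / 3)`, ...,
`1 / |a X c| ^ (4 / 3)`, each of which is summable over triples of nonzero integers.
-/

section HalfPlane

open Filter Asymptotics Bornology
open scoped Topology

variable {E : Type*} [NormedAddCommGroup E] [NormedSpace ℂ E] {f : ℂ → E}

theorem norm_intervalIntegral_imaginary_axis_le {R C : ℝ} (hR : 0 ≤ R)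
    (hf : DiffContOnCl ℂ f {z | 0 < z.re})
    (hC : ∀ z : ℂ, 0 ≤ z.re → R ≤ ‖z‖ → ‖f z‖ ≤ C) :
    ‖∫ t : ℝ in (-R)..R, f (I * t)‖ ≤ 4 * R * C := by
  have hcont : ContinuousOn f {z | 0 ≤ z.re} := by
    simpa only [closure_setOfPred_lt_re] using hf.continuousOn
  have hrect := integral_boundary_rect_eq_zero_of_continuousOn_of_differentiableOn f
    (⟨0, -R⟩ : ℂ) (⟨R, R⟩ : ℂ)
    (hcont.mono fun z hz => (Set.uIcc_of_le hR ▸ hz.1 : z.re ∈ Set.Icc 0 R).1)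
    (hf.differentiableOn.mono fun z hz => (min_eq_left hR ▸ hz.1.1 : 0 < z.re))
  have horizontal (s : ℝ) (hs : |s| = R) : ‖∫ x : ℝ in 0..R, f (x + s * I)‖ ≤ C * |R - 0| := by
    refine intervalIntegral.norm_integral_le_of_norm_le_const fun x hx => hC _ ?_ ?_
    · simpa using (Set.uIoc_of_le hR ▸ hx : x ∈ Set.Ioc 0 R).1.le
    · simpa [hs] using abs_im_le_norm (x + s * I)
  have vertical : ‖∫ t : ℝ in (-R)..R, f (R + t * I)‖ ≤ C * |R - -R| := by
    refine intervalIntegral.norm_integral_le_of_norm_le_const fun t _ => hC _ ?_ ?_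
    · simpa using hR
    · simpa [abs_of_nonneg hR] using abs_re_le_norm (R + t * I)
  have axis : ∫ t : ℝ in (-R)..R, f ((0 : ℝ) + t * I) = ∫ t : ℝ in (-R)..R, f (I * t) := by
    simp only [ofReal_zero, zero_add, mul_comm I]
  simp only [axis] at hrect
  calc ‖∫ t : ℝ in (-R)..R, f (I * t)‖
      = ‖I • ∫ t : ℝ in (-R)..R, f (I * t)‖ := by rw [norm_smul, norm_I, one_mul]
    _ ≤ C * |R - 0| + C * |R - 0| + C * |R - -R| := by
      rw [← sub_eq_zero.mp hrect]
      refine norm_add_le_of_le (norm_sub_le_of_le (horizontal (-R) ?_) (horizontal R ?_)) ?_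
      · rw [abs_neg, abs_of_nonneg hR]
      · exact abs_of_nonneg hR
      · rwa [norm_smul, norm_I, one_mul]
    _ = 4 * R * C := by
      rw [sub_zero, sub_neg_eq_add, abs_of_nonneg hR, abs_of_nonneg (add_nonneg hR hR)]
      ring

theorem tendsto_intervalIntegral_imaginary_axis_zero
    (hf : DiffContOnCl ℂ f {z | 0 < z.re})
    (hdecay : f =o[cobounded ℂ ⊓ 𝓟 {z | 0 ≤ z.re}] fun z => z⁻¹) :
    Tendsto (fun R : ℝ => ∫ t : ℝ in (-R)..R, f (I * t)) atTop (𝓝 0) := by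
  refine Metric.tendsto_atTop.mpr fun ε hε => ?_
  have hbound := hdecay.def (show 0 < ε / 8 by positivity)
  obtain ⟨R₀, -, hR₀⟩ := (hasBasis_cobounded_norm.inf_principal _).eventually_iff.mp hbound
  refine ⟨max R₀ 1, fun R hR => ?_⟩
  have hR0 : 0 < R := one_pos.trans_le ((le_max_right _ _).trans hR)
  rw [dist_zero_right]
  calc ‖∫ t : ℝ in (-R)..R, f (I * t)‖ ≤ 4 * R * (ε / 8 * R⁻¹) := by
        refine norm_intervalIntegral_imaginary_axis_le hR0.le hf fun z hz hRz => ?_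
        refine (hR₀ ⟨((le_max_left _ _).trans hR).trans hRz, hz⟩).trans ?_
        rw [norm_inv]
        gcongr
    _ = ε / 2 := by field_simp; norm_num
    _ < ε := half_lt_self hε

theorem integral_imaginary_axis_eq_zero (hf : DiffContOnCl ℂ f {z | 0 < z.re})
    (hdecay : f =o[cobounded ℂ ⊓ 𝓟 {z | 0 ≤ z.re}] fun z => z⁻¹)
    (hint : Integrable fun t : ℝ => f (I * t)) : ∫ t : ℝ, f (I * t) = 0 :=
  tendsto_nhds_unique (intervalIntegral_tendsto_integral hint tendsto_neg_atTop_atBot tendsto_id)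
    (tendsto_intervalIntegral_imaginary_axis_zero hf hdecay)

end HalfPlane

section LinearFactors

variable {a x : ℝ}

theorem norm_ofReal_mul_add_ofReal_sq (a x : ℝ) (z : ℂ) :
    ‖(a : ℂ) * z + x‖ ^ 2 = a ^ 2 * ‖z‖ ^ 2 + 2 * (a * x * z.re) + x ^ 2 := by
  simp only [← normSq_eq_norm_sq, normSq_apply, add_re, add_im, re_ofReal_mul, im_ofReal_mul,
    ofReal_re, ofReal_im]
  ring

theorem abs_mul_norm_le_norm_ofReal_mul_add {z : ℂ} (h : 0 ≤ a * x * z.re) :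
    |a| * ‖z‖ ≤ ‖(a : ℂ) * z + x‖ := by
  refine le_of_sq_le_sq ?_ (norm_nonneg _)
  rw [norm_ofReal_mul_add_ofReal_sq, mul_pow, sq_abs]
  linarith [sq_nonneg x]

theorem abs_le_norm_ofReal_mul_add {z : ℂ} (h : 0 ≤ a * x * z.re) :
    |x| ≤ ‖(a : ℂ) * z + x‖ := by
  refine le_of_sq_le_sq ?_ (norm_nonneg _)
  rw [norm_ofReal_mul_add_ofReal_sq, sq_abs]
  linarith [mul_nonneg (sq_nonneg a) (sq_nonneg ‖z‖)]

theorem norm_ofReal_mul_I_mul_add_ofReal_sq (a x t : ℝ) :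
    ‖(a : ℂ) * (I * t) + x‖ ^ 2 = a ^ 2 * t ^ 2 + x ^ 2 := by
  simp [norm_ofReal_mul_add_ofReal_sq]

theorem norm_I_mul_ofReal (t : ℝ) : ‖I * (t : ℂ)‖ = |t| := by
  rw [norm_mul, norm_I, one_mul, norm_real, norm_eq_abs]

theorem abs_le_norm_ofReal_mul_I_mul_add (ha : 1 ≤ |a|) (x t : ℝ) :
    |t| ≤ ‖(a : ℂ) * (I * t) + x‖ := by
  rw [← norm_I_mul_ofReal]
  exact (le_mul_of_one_le_left (norm_nonneg _) ha).trans
    (abs_mul_norm_le_norm_ofReal_mul_add (by simp))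

theorem two_mul_abs_mul_abs_le_norm_sq (a x t : ℝ) :
    2 * |a * x| * |t| ≤ ‖(a : ℂ) * (I * t) + x‖ ^ 2 := by
  have amgm := two_mul_le_add_sq (|a| * |t|) |x|
  rw [mul_pow, sq_abs, sq_abs, sq_abs] at amgm
  rw [norm_ofReal_mul_I_mul_add_ofReal_sq, abs_mul]
  linarith

theorem inv_sq_mul_sq_add_sq_eq (a : ℝ) (hx : x ≠ 0) (t : ℝ) :
    (a ^ 2 * t ^ 2 + x ^ 2)⁻¹ = (x ^ 2)⁻¹ * (1 + (a / x * t) ^ 2)⁻¹ := by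
  rw [← mul_inv]
  congr 1
  field_simp
  ring

theorem integrable_inv_sq_mul_sq_add_sq (ha : a ≠ 0) (hx : x ≠ 0) :
    Integrable fun t : ℝ => (a ^ 2 * t ^ 2 + x ^ 2)⁻¹ := by
  simp only [inv_sq_mul_sq_add_sq_eq a hx]
  exact (integrable_inv_one_add_sq.comp_mul_left' (div_ne_zero ha hx)).const_mul _

theorem integral_inv_sq_mul_sq_add_sq (a : ℝ) (hx : x ≠ 0) :
    ∫ t : ℝ, (a ^ 2 * t ^ 2 + x ^ 2)⁻¹ = π / |a * x| := by
  simp only [inv_sq_mul_sq_add_sq_eq a hx]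
  rw [integral_const_mul, Measure.integral_comp_mul_left (fun t : ℝ => (1 + t ^ 2)⁻¹),
    integral_univ_inv_one_add_sq, smul_eq_mul, inv_div, abs_div, abs_mul, ← sq_abs x]
  field_simp

end LinearFactors

theorem pow_mul_pow_le_pow_mul_pow_of_le {s δ α β : ℝ} {i j k l : ℕ} (hs : 0 ≤ s) (hδ : 0 ≤ δ)
    (hsα : s ≤ α) (hsβ : s ≤ β) (hδα : δ ≤ α) (hδβ : δ ≤ β) (h : i + j = k + l) :
    s ^ i * δ ^ j ≤ α ^ k * β ^ l := by
  calc s ^ i * δ ^ j ≤ max s δ ^ i * max s δ ^ j := by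
        gcongr
        · exact le_max_left _ _
        · exact le_max_right _ _
    _ = max s δ ^ k * max s δ ^ l := by rw [← pow_add, ← pow_add, h]
    _ ≤ α ^ k * β ^ l := by
        gcongr
        · exact pow_nonneg (hs.trans hsα) k
        · exact max_le hsα hδα
        · exact max_le hsβ hδβ

/-- The function `z ^ m / ((a z + x) ^ p (c z + y) ^ q)`: up to the choice of the real numbers
`a, x, c, y`, a summand of `S6` multiplied by `z ^ m`. -/
def cuspTerm (p q m : ℕ) (a x c y : ℝ) (z : ℂ) : ℂ :=
  z ^ m / (((a : ℂ) * z + x) ^ p * ((c : ℂ) * z + y) ^ q)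

section CuspTerm

variable {p q m : ℕ} {a x c y δ : ℝ}

theorem norm_cuspTerm (p q m : ℕ) (a x c y : ℝ) (z : ℂ) :
    ‖cuspTerm p q m a x c y z‖ =
      ‖z‖ ^ m / (‖(a : ℂ) * z + x‖ ^ p * ‖(c : ℂ) * z + y‖ ^ q) := by
  simp only [cuspTerm, norm_div, norm_mul, norm_pow]

theorem cuspTerm_neg_neg (p q m : ℕ) (a x c y : ℝ) (z : ℂ) :
    cuspTerm p q m (-a) x (-c) y z = (-1) ^ m * cuspTerm p q m a x c y (-z) := by
  simp only [cuspTerm, ofReal_neg, neg_mul, mul_neg]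
  rw [← mul_div_assoc, ← mul_pow, neg_one_mul, neg_neg]

theorem diffContOnCl_cuspTerm (hax : 0 < a * x) (hcy : 0 < c * y) :
    DiffContOnCl ℂ (cuspTerm p q m a x c y) {z | 0 < z.re} := by
  refine DifferentiableOn.diffContOnCl fun z hz => ?_
  rw [closure_setOfPred_lt_re] at hz
  have ne_zero {b u : ℝ} (hbu : 0 < b * u) : (b : ℂ) * z + u ≠ 0 :=
    norm_pos_iff.mp <| (abs_pos.mpr (right_ne_zero_of_mul hbu.ne')).trans_le
      (abs_le_norm_ofReal_mul_add (mul_nonneg hbu.le hz))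
  exact DifferentiableAt.differentiableWithinAt <| .div (by fun_prop) (by fun_prop)
    (mul_ne_zero (pow_ne_zero _ (ne_zero hax)) (pow_ne_zero _ (ne_zero hcy)))

open Filter Asymptotics Bornology in
theorem cuspTerm_isLittleO_inv (hm : m + 2 ≤ p + q) (hax : 0 < a * x) (hcy : 0 < c * y) :
    cuspTerm p q m a x c y =o[cobounded ℂ ⊓ 𝓟 {z | 0 ≤ z.re}] fun z => z⁻¹ := by
  have ha : 0 < |a| := abs_pos.mpr (left_ne_zero_of_mul hax.ne')
  have hc : 0 < |c| := abs_pos.mpr (left_ne_zero_of_mul hcy.ne')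
  have sq_decay : cuspTerm p q m a x c y =O[cobounded ℂ ⊓ 𝓟 {z | 0 ≤ z.re}]
      fun z => z⁻¹ * z⁻¹ := by
    refine .of_bound (1 / (|a| ^ p * |c| ^ q)) ?_
    filter_upwards [mem_inf_of_left (eventually_cobounded_le_norm 1),
      mem_inf_of_right (mem_principal_self _)] with z (hz1 : 1 ≤ ‖z‖) hz
    have : 0 < ‖z‖ := one_pos.trans_le hz1
    calc ‖cuspTerm p q m a x c y z‖
        ≤ ‖z‖ ^ m / ((|a| * ‖z‖) ^ p * (|c| * ‖z‖) ^ q) := by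
          rw [norm_cuspTerm]
          gcongr
          · exact abs_mul_norm_le_norm_ofReal_mul_add (mul_nonneg hax.le hz)
          · exact abs_mul_norm_le_norm_ofReal_mul_add (mul_nonneg hcy.le hz)
      _ = 1 / (|a| ^ p * |c| ^ q) * (‖z‖ ^ m / ‖z‖ ^ (p + q)) := by
          rw [mul_pow, mul_pow, pow_add]
          field_simp
      _ ≤ 1 / (|a| ^ p * |c| ^ q) * (‖z‖ ^ m / ‖z‖ ^ (m + 2)) := by gcongr
      _ = 1 / (|a| ^ p * |c| ^ q) * ‖z⁻¹ * z⁻¹‖ := by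
          rw [norm_mul, norm_inv, pow_add]
          field_simp
  have inv_small : (fun z : ℂ => z⁻¹) =o[cobounded ℂ ⊓ 𝓟 {z | 0 ≤ z.re}] fun _ => (1 : ℂ) :=
    (isLittleO_one_iff ℂ).mpr (tendsto_inv₀_cobounded.mono_left inf_le_left)
  simpa only [mul_one] using
    sq_decay.trans_isLittleO ((isBigO_refl (fun z : ℂ => z⁻¹) _).mul_isLittleO inv_small)

theorem integral_cuspTerm_eq_zero_of_pos (hm : m + 2 ≤ p + q) (hax : 0 < a * x) (hcy : 0 < c * y)
    (hint : Integrable fun t : ℝ => cuspTerm p q m a x c y (I * t)) :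
    ∫ t : ℝ, cuspTerm p q m a x c y (I * t) = 0 :=
  integral_imaginary_axis_eq_zero (diffContOnCl_cuspTerm hax hcy)
    (cuspTerm_isLittleO_inv hm hax hcy) hint

theorem integral_cuspTerm_eq_zero (hm : m + 2 ≤ p + q) (hsign : 0 < (a * x) * (c * y))
    (hint : Integrable fun t : ℝ => cuspTerm p q m a x c y (I * t)) :
    ∫ t : ℝ, cuspTerm p q m a x c y (I * t) = 0 := by
  rcases pos_and_pos_or_neg_and_neg_of_mul_pos hsign with ⟨hax, hcy⟩ | ⟨hax, hcy⟩
  · exact integral_cuspTerm_eq_zero_of_pos hm hax hcy hint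
  · have reflect (t : ℝ) : cuspTerm p q m a x c y (I * t) =
        (-1) ^ m * cuspTerm p q m (-a) x (-c) y (I * (-t : ℝ)) := by
      rw [← neg_neg a, ← neg_neg c, cuspTerm_neg_neg, neg_neg, neg_neg, ofReal_neg, mul_neg]
    have hint' : Integrable fun t : ℝ => cuspTerm p q m (-a) x (-c) y (I * t) := by
      simp only [cuspTerm_neg_neg, ← mul_neg, ← ofReal_neg]
      exact hint.comp_neg.const_mul _
    simp only [reflect]
    rw [integral_const_mul,
      integral_neg_eq_self fun t : ℝ => cuspTerm p q m (-a) x (-c) y (I * t),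
      integral_cuspTerm_eq_zero_of_pos hm (by linarith) (by linarith) hint', mul_zero]

theorem norm_cuspTerm_I_mul_le (hm0 : 0 < m) (hm : m + 3 ≤ p + q) (hp : 2 ≤ p) (hq : 2 ≤ q)
    (hδ : 0 < δ) (ha : 1 ≤ |a|) (hc : 1 ≤ |c|) (hx : δ ≤ |x|) (hy : δ ≤ |y|) (t : ℝ) :
    ‖cuspTerm p q m a x c y (I * t)‖ ≤
      (2 * δ ^ (p + q - 3 - m) * |c * y|)⁻¹ * (a ^ 2 * t ^ 2 + x ^ 2)⁻¹ := by
  obtain ⟨p, rfl⟩ := Nat.exists_eq_add_of_le' hp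
  obtain ⟨q, rfl⟩ := Nat.exists_eq_add_of_le' hq
  obtain ⟨m, rfl⟩ := Nat.exists_eq_add_of_le' hm0
  have const_le {b u : ℝ} (hu : δ ≤ |u|) : δ ≤ ‖(b : ℂ) * (I * t) + u‖ :=
    hu.trans (abs_le_norm_ofReal_mul_add (by simp))
  rw [norm_cuspTerm, norm_I_mul_ofReal, ← norm_ofReal_mul_I_mul_add_ofReal_sq]
  have amgm := two_mul_abs_mul_abs_le_norm_sq c y t
  have hα := abs_le_norm_ofReal_mul_I_mul_add ha x t
  have hα' := const_le (b := a) hx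
  have hβ := abs_le_norm_ofReal_mul_I_mul_add hc y t
  have hβ' := const_le (b := c) hy
  set α := ‖(a : ℂ) * (I * t) + x‖
  set β := ‖(c : ℂ) * (I * t) + y‖
  have hα0 : 0 < α := hδ.trans_le hα'
  have hβ0 : 0 < β := hδ.trans_le hβ'
  have hcy : 0 < |c * y| := by
    rw [abs_mul]
    exact mul_pos (one_pos.trans_le hc) (hδ.trans_le hy)
  have excess : |t| ^ m * δ ^ (p + 2 + (q + 2) - 3 - (m + 1)) ≤ α ^ p * β ^ q :=
    pow_mul_pow_le_pow_mul_pow_of_le (abs_nonneg t) hδ.le hα hβ hα' hβ' (by omega)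
  rw [← mul_inv, ← one_div, div_le_div_iff₀ (by positivity) (by positivity), one_mul]
  calc |t| ^ (m + 1) * (2 * δ ^ (p + 2 + (q + 2) - 3 - (m + 1)) * |c * y| * α ^ 2)
      = (|t| ^ m * δ ^ (p + 2 + (q + 2) - 3 - (m + 1))) * (2 * |c * y| * |t|) * α ^ 2 := by ring
    _ ≤ (α ^ p * β ^ q) * β ^ 2 * α ^ 2 := by gcongr
    _ = α ^ (p + 2) * β ^ (q + 2) := by ring

theorem integrable_cuspTerm (hm0 : 0 < m) (hm : m + 3 ≤ p + q) (hp : 2 ≤ p) (hq : 2 ≤ q)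
    (hδ : 0 < δ) (ha : 1 ≤ |a|) (hc : 1 ≤ |c|) (hx : δ ≤ |x|) (hy : δ ≤ |y|) :
    Integrable fun t : ℝ => cuspTerm p q m a x c y (I * t) := by
  have ha0 : a ≠ 0 := abs_pos.mp (one_pos.trans_le ha)
  have hx0 : x ≠ 0 := abs_pos.mp (hδ.trans_le hx)
  refine ((integrable_inv_sq_mul_sq_add_sq ha0 hx0).const_mul _).mono'
    (Measurable.aestronglyMeasurable ?_)
    (.of_forall (norm_cuspTerm_I_mul_le hm0 hm hp hq hδ ha hc hx hy))
  unfold cuspTerm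
  fun_prop

theorem integral_norm_cuspTerm_le (hm0 : 0 < m) (hm : m + 3 ≤ p + q) (hp : 2 ≤ p) (hq : 2 ≤ q)
    (hδ : 0 < δ) (ha : 1 ≤ |a|) (hc : 1 ≤ |c|) (hx : δ ≤ |x|) (hy : δ ≤ |y|) :
    ∫ t : ℝ, ‖cuspTerm p q m a x c y (I * t)‖ ≤
      π / (2 * δ ^ (p + q - 3 - m)) * |(a * x) * (c * y)|⁻¹ := by
  have ha0 : a ≠ 0 := abs_pos.mp (one_pos.trans_le ha)
  have hx0 : x ≠ 0 := abs_pos.mp (hδ.trans_le hx)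
  calc ∫ t : ℝ, ‖cuspTerm p q m a x c y (I * t)‖
      ≤ ∫ t : ℝ, (2 * δ ^ (p + q - 3 - m) * |c * y|)⁻¹ * (a ^ 2 * t ^ 2 + x ^ 2)⁻¹ :=
        integral_mono (integrable_cuspTerm hm0 hm hp hq hδ ha hc hx hy).norm
          ((integrable_inv_sq_mul_sq_add_sq ha0 hx0).const_mul _)
          (norm_cuspTerm_I_mul_le hm0 hm hp hq hδ ha hc hx hy)
    _ = π / (2 * δ ^ (p + q - 3 - m)) * |(a * x) * (c * y)|⁻¹ := by
        rw [integral_const_mul, integral_inv_sq_mul_sq_add_sq a hx0, abs_mul (a * x), mul_inv,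
          mul_inv]
        ring

end CuspTerm

section IntegerSums

theorem one_le_abs_intCast {k : ℤ} (hk : k ≠ 0) : 1 ≤ |(k : ℝ)| := by
  exact_mod_cast Int.one_le_abs hk

theorem inv_le_abs_intCast_div {k : ℤ} (hk : k ≠ 0) (D : ℕ) : (D : ℝ)⁻¹ ≤ |(k : ℝ) / D| := by
  rw [abs_div, Nat.abs_cast, inv_eq_one_div]
  gcongr
  exact one_le_abs_intCast hk

theorem inv_mul_four_le_sum_rpow {u v w x : ℝ} (hu : 0 < u) (hv : 0 < v) (hw : 0 < w) (hx : 0 < x) :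
    (u * v * w * x)⁻¹ ≤ 1 / 4 * (v * w * x) ^ (-(4 / 3) : ℝ) +
      1 / 4 * (u * w * x) ^ (-(4 / 3) : ℝ) + 1 / 4 * (u * v * x) ^ (-(4 / 3) : ℝ) +
      1 / 4 * (u * v * w) ^ (-(4 / 3) : ℝ) := by
  refine le_of_eq_of_le ?_ (geom_mean_le_arith_mean4_weighted (w₁ := 1 / 4) (w₂ := 1 / 4)
    (w₃ := 1 / 4) (w₄ := 1 / 4) (by norm_num) (by norm_num) (by norm_num) (by norm_num)
    (by positivity) (by positivity) (by positivity) (by positivity) (by norm_num))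
  simp only [← Real.rpow_mul (show 0 ≤ v * w * x by positivity),
    ← Real.rpow_mul (show 0 ≤ u * w * x by positivity),
    ← Real.rpow_mul (show 0 ≤ u * v * x by positivity),
    ← Real.rpow_mul (show 0 ≤ u * v * w by positivity)]
  rw [← Real.mul_rpow (by positivity) (by positivity), ← Real.mul_rpow (by positivity)
    (by positivity), ← Real.mul_rpow (by positivity) (by positivity)]
  calc (u * v * w * x)⁻¹ = ((u * v * w * x) ^ 3) ^ (-(4 / 3) * (1 / 4) : ℝ) := by
        rw [← Real.rpow_natCast, ← Real.rpow_mul (by positivity), ← Real.rpow_neg_one]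
        norm_num
    _ = (v * w * x * (u * w * x) * (u * v * x) * (u * v * w)) ^ (-(4 / 3) * (1 / 4) : ℝ) := by
        ring_nf

variable {ι : Type*}

theorem summable_abs_intCast_mul_three_rpow {u v w : ι → ℤ}
    (hinj : Function.Injective fun i => (u i, v i, w i)) {b : ℝ} (hb : 1 < b) :
    Summable fun i => (|(u i : ℝ)| * |(v i : ℝ)| * |(w i : ℝ)|) ^ (-b) := by
  have hone := Real.summable_abs_int_rpow hb
  have hnonneg (k : ℤ) : 0 ≤ |(k : ℝ)| ^ (-b) := by positivity
  have htwo := hone.mul_of_nonneg hone hnonneg hnonneg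
  have hthree := hone.mul_of_nonneg htwo hnonneg fun k => mul_nonneg (hnonneg k.1) (hnonneg k.2)
  refine (hthree.comp_injective hinj).congr fun i => ?_
  rw [Function.comp_apply, Real.mul_rpow (by positivity) (by positivity),
    Real.mul_rpow (by positivity) (by positivity), mul_assoc]

theorem summable_inv_abs_of_mul_sub_mul_eq {a x c y : ι → ℤ} {D : ℤ}
    (hinj : Function.Injective fun i => (a i, x i, c i, y i))
    (hdet : ∀ i, a i * y i - x i * c i = D) (ha : ∀ i, a i ≠ 0) (hx : ∀ i, x i ≠ 0)
    (hc : ∀ i, c i ≠ 0) (hy : ∀ i, y i ≠ 0) :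
    Summable fun i => (|(a i : ℝ)| * |(x i : ℝ)| * |(c i : ℝ)| * |(y i : ℝ)|)⁻¹ := by
  have drop_a : Function.Injective fun i => (x i, c i, y i) := fun i j hij => by
    obtain ⟨hxi, hci, hyi⟩ : x i = x j ∧ c i = c j ∧ y i = y j := by simpa using hij
    have hai : a i = a j := mul_right_cancel₀ (hy i) (by grind)
    exact hinj (by simp only [hai, hxi, hci, hyi])
  have drop_x : Function.Injective fun i => (a i, c i, y i) := fun i j hij => by
    obtain ⟨hai, hci, hyi⟩ : a i = a j ∧ c i = c j ∧ y i = y j := by simpa using hij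
    have hxi : x i = x j := mul_right_cancel₀ (hc i) (by grind)
    exact hinj (by simp only [hai, hxi, hci, hyi])
  have drop_c : Function.Injective fun i => (a i, x i, y i) := fun i j hij => by
    obtain ⟨hai, hxi, hyi⟩ : a i = a j ∧ x i = x j ∧ y i = y j := by simpa using hij
    have hci : c i = c j := mul_left_cancel₀ (hx i) (by grind)
    exact hinj (by simp only [hai, hxi, hci, hyi])
  have drop_y : Function.Injective fun i => (a i, x i, c i) := fun i j hij => by
    obtain ⟨hai, hxi, hci⟩ : a i = a j ∧ x i = x j ∧ c i = c j := by simpa using hij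
    have hyi : y i = y j := mul_left_cancel₀ (ha i) (by grind)
    exact hinj (by simp only [hai, hxi, hci, hyi])
  have abs_cast_pos {k : ℤ} (hk : k ≠ 0) : 0 < |(k : ℝ)| := abs_pos.mpr (Int.cast_ne_zero.mpr hk)
  have hexp : (1 : ℝ) < 4 / 3 := by norm_num
  exact .of_nonneg_of_le (fun i => by positivity)
    (fun i => inv_mul_four_le_sum_rpow (abs_cast_pos (ha i)) (abs_cast_pos (hx i))
      (abs_cast_pos (hc i)) (abs_cast_pos (hy i)))
    (((((summable_abs_intCast_mul_three_rpow drop_a hexp).mul_left _).add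
      ((summable_abs_intCast_mul_three_rpow drop_x hexp).mul_left _)).add
      ((summable_abs_intCast_mul_three_rpow drop_c hexp).mul_left _)).add
      ((summable_abs_intCast_mul_three_rpow drop_y hexp).mul_left _))

end IntegerSums

/-- The index set of `S6`, a matrix `(a b; c d)` being encoded as the tuple `(a, b, c, d)`. -/
def S6Index (N D : ℕ) (h : ℤ) : Set (ℤ × ℤ × ℤ × ℤ) :=
  {p | p.1 * p.2.2.2 - p.2.1 * p.2.2.1 = 1 ∧ (N : ℤ) ∣ p.2.2.1 ∧
    0 < (p.1 : ℝ) * p.2.2.1 * ((p.1 : ℝ) * h / D + p.2.1) *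
      ((p.2.2.1 : ℝ) * h / D + p.2.2.2)}

/-- The integer `D * (k * h / D + l)`, for `(k, l)` a row of a matrix. -/
def scaledShift (D : ℕ) (h k l : ℤ) : ℤ := k * h + l * D

/-- The summand of `S6 N D w n h z * z ^ m` at the matrix `(a b; c d)`, with the constant terms
`a * h / D + b` and `c * h / D + d` written as integers divided by `D`. -/
def S6Term (w n m D : ℕ) (h : ℤ) : ℤ × ℤ × ℤ × ℤ → ℂ → ℂ
  | (a, b, c, d) =>
    cuspTerm (w - n + 1) (n + 1) m a (scaledShift D h a b / D) c (scaledShift D h c d / D)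

section S6

variable {N w n m D : ℕ} {h : ℤ} {a b c d : ℤ}

theorem scaledShift_div (hD : 0 < D) (h k l : ℤ) :
    (scaledShift D h k l : ℝ) / D = k * h / D + l := by
  simp only [scaledShift, Int.cast_add, Int.cast_mul, Int.cast_natCast]
  field_simp

theorem scaledShift_right_injective (hD : 0 < D) (h k : ℤ) :
    Function.Injective (scaledShift D h k) := fun _ _ hl =>
  mul_right_cancel₀ (Int.natCast_ne_zero.mpr hD.ne') (add_left_cancel hl)

theorem S6_mul_pow_eq_tsum (hD : 0 < D) (z : ℂ) :
    S6 N D w n h z * z ^ m = ∑' p : S6Index N D h, S6Term w n m D h p z := by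
  classical
  rw [tsum_subtype (S6Index N D h) fun p => S6Term w n m D h p z, S6, ← tsum_mul_right]
  refine tsum_congr fun ⟨a, b, c, d⟩ => ?_
  rw [Set.indicator_apply]
  simp only [S6Index, Set.mem_ofPred_eq, S6Term, cuspTerm, scaledShift_div hD,
    ite_mul, zero_mul, one_div_mul_eq_div]
  push_cast
  simp only [add_assoc]

theorem mul_scaledShift_sub_eq (hp : (a, b, c, d) ∈ S6Index N D h) :
    a * scaledShift D h c d - scaledShift D h a b * c = D := by
  have hdet : a * d - b * c = 1 := hp.1
  simp only [scaledShift]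
  linear_combination (D : ℤ) * hdet

theorem mul_scaledShift_div_pos (hD : 0 < D) (hp : (a, b, c, d) ∈ S6Index N D h) :
    0 < (a * (scaledShift D h a b / D : ℝ)) * (c * (scaledShift D h c d / D : ℝ)) := by
  have hsign := hp.2.2
  rw [scaledShift_div hD, scaledShift_div hD]
  linarith

theorem ne_zero_of_mem_S6Index (hD : 0 < D) (hp : (a, b, c, d) ∈ S6Index N D h) :
    a ≠ 0 ∧ scaledShift D h a b ≠ 0 ∧ c ≠ 0 ∧ scaledShift D h c d ≠ 0 := by
  have hsign := mul_scaledShift_div_pos hD hp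
  refine ⟨?_, ?_, ?_, ?_⟩ <;> intro h0 <;> simp [h0] at hsign

theorem integrable_S6Term (hn0 : 0 < n) (hnw : n < w) (hD : 0 < D) (hm0 : 0 < m) (hmw : m < w)
    {p : ℤ × ℤ × ℤ × ℤ} (hp : p ∈ S6Index N D h) :
    Integrable fun t : ℝ => S6Term w n m D h p (I * t) := by
  obtain ⟨a, b, c, d⟩ := p
  obtain ⟨ha, hx, hc, hy⟩ := ne_zero_of_mem_S6Index hD hp
  exact integrable_cuspTerm hm0 (by omega) (by omega) (by omega) (by positivity)
    (one_le_abs_intCast ha) (one_le_abs_intCast hc) (inv_le_abs_intCast_div hx D)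
    (inv_le_abs_intCast_div hy D)

theorem integral_S6Term_eq_zero (hn0 : 0 < n) (hnw : n < w) (hD : 0 < D) (hm0 : 0 < m)
    (hmw : m < w) {p : ℤ × ℤ × ℤ × ℤ} (hp : p ∈ S6Index N D h) :
    ∫ t : ℝ, S6Term w n m D h p (I * t) = 0 :=
  integral_cuspTerm_eq_zero (by omega) (by exact_mod_cast mul_scaledShift_div_pos hD hp)
    (integrable_S6Term hn0 hnw hD hm0 hmw hp)

theorem integral_norm_S6Term_le (hn0 : 0 < n) (hnw : n < w) (hD : 0 < D) (hm0 : 0 < m)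
    (hmw : m < w) (hp : (a, b, c, d) ∈ S6Index N D h) :
    ∫ t : ℝ, ‖S6Term w n m D h (a, b, c, d) (I * t)‖ ≤
      π / (2 * (D : ℝ)⁻¹ ^ (w - 1 - m)) * (D : ℝ) ^ 2 *
        (|(a : ℝ)| * |(scaledShift D h a b : ℝ)| * |(c : ℝ)| * |(scaledShift D h c d : ℝ)|)⁻¹ := by
  obtain ⟨ha, hx, hc, hy⟩ := ne_zero_of_mem_S6Index hD hp
  refine (integral_norm_cuspTerm_le hm0 (by omega) (by omega) (by omega) (by positivity)
    (one_le_abs_intCast ha) (one_le_abs_intCast hc) (inv_le_abs_intCast_div hx D)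
    (inv_le_abs_intCast_div hy D)).trans_eq ?_
  rw [show w - n + 1 + (n + 1) - 3 - m = w - 1 - m by omega]
  simp only [abs_mul, abs_div, Nat.abs_cast]
  field_simp

theorem summable_integral_norm_S6Term (hn0 : 0 < n) (hnw : n < w) (hD : 0 < D) (hm0 : 0 < m)
    (hmw : m < w) :
    Summable fun p : S6Index N D h => ∫ t : ℝ, ‖S6Term w n m D h p (I * t)‖ := by
  have hinj : Function.Injective fun p : S6Index N D h =>
      (p.1.1, scaledShift D h p.1.1 p.1.2.1, p.1.2.2.1,
        scaledShift D h p.1.2.2.1 p.1.2.2.2) := by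
    rintro ⟨⟨a, b, c, d⟩, hp⟩ ⟨⟨a', b', c', d'⟩, hp'⟩ heq
    simp only [Prod.mk.injEq] at heq
    obtain ⟨rfl, hb, rfl, hd⟩ := heq
    cases scaledShift_right_injective hD h a hb
    cases scaledShift_right_injective hD h c hd
    rfl
  have hne (p : S6Index N D h) := ne_zero_of_mem_S6Index hD p.2
  exact .of_nonneg_of_le (fun p => integral_nonneg fun t => norm_nonneg _)
    (fun p => integral_norm_S6Term_le hn0 hnw hD hm0 hmw p.2)
    ((summable_inv_abs_of_mul_sub_mul_eq hinj (fun p => mul_scaledShift_sub_eq p.2)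
      (fun p => (hne p).1) (fun p => (hne p).2.1) (fun p => (hne p).2.2.1)
      (fun p => (hne p).2.2.2)).mul_left _)

theorem S6_integral_zero_general (hn0 : 0 < n) (hnw : n < w) (hD : 0 < D) (hm0 : 0 < m)
    (hmw : m < w) : (I * ∫ y : ℝ, S6 N D w n h (I * y) * (I * y) ^ m) = 0 := by
  simp only [S6_mul_pow_eq_tsum hD]
  rw [← integral_tsum_of_summable_integral_norm
    (fun p => integrable_S6Term hn0 hnw hD hm0 hmw p.2)
    (summable_integral_norm_S6Term hn0 hnw hD hm0 hmw)]
  simp only [fun p : S6Index N D h => integral_S6Term_eq_zero hn0 hnw hD hm0 hmw p.2, tsum_zero,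
    mul_zero]

end S6

/-- for `0 < m < w`, the integral of `S_{6,h}(z)·z^m` over the whole
imaginary axis `z = iy`, `−∞ < y < ∞`, vanishes. -/
theorem S6_integral_zero (N : ℕ) (hN : 1 ≤ N) (w : ℕ) (hw : 2 ≤ w) (hwe : Even w)
    (n : ℕ) (hn0 : 0 < n) (hnw : n < w) (D : ℕ) (hD : 1 < D) (h : ℤ)
    (m : ℕ) (hm0 : 0 < m) (hmw : m < w) :
    (Complex.I * ∫ y : ℝ, S6 N D w n h (Complex.I * y) * (Complex.I * y) ^ m) = 0 :=
  S6_integral_zero_general hn0 hnw (one_pos.trans hD) hm0 hmw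

end
end
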